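/- Eulerian rewriting of the Wunsch equation: let I ⊆ ℝ be an interval and u : I × S¹ → ℝ smooth with ∫_{S¹} u(t,θ) dθ = 0 for each t, and set ω = H(∂_θ u) (Hilbert transform in θ at each fixed t). If ∂_t ω + u ∂_θ ω + 2 (∂_θ u) ω = 0 pointwise, then pointwise on I × S¹: ∂_t ∂_θ u + u ∂²_θ u + (∂_θ u)² = u ∂²_θ u + H(u · H(∂²_θ u)) + ω², i.e. ∂_t∂_θu + u∂²_θu + (∂_θu)² = −F + ω² with F = −u·∂²_θu − H(u·H(∂²_θu)). -/

import Mathlib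

open MeasureTheory Real

/-- The `n`-th Fourier coefficient of a `2π`-periodic function `f : ℝ → ℝ`. -/
noncomputable def fourierC (f : ℝ → ℝ) (n : ℤ) : ℂ :=
  (1 / (2 * π)) * ∫ θ in (0:ℝ)..(2 * π), (f θ : ℂ) * Complex.exp (-Complex.I * (n : ℂ) * (θ : ℂ))

/-- The Hilbert transform on the circle, sending `Σ cₙ e^{inθ}` to `Σ (−i sgn n) cₙ e^{inθ}`. -/
noncomputable def hilbertT (f : ℝ → ℝ) (θ : ℝ) : ℝ :=
  (∑' n : ℤ, -Complex.I * ((n.sign : ℤ) : ℂ) * fourierC f n *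
    Complex.exp (Complex.I * (n : ℂ) * (θ : ℂ))).re

/-!
The Hilbert transform `H` commutes with `∂_t` and `∂_θ`, so at each fixed time the equation reads
`H w + u H(u_θθ) + 2 u_θ H(u_θ) = 0` with `w = ∂_t u_θ`, an identity between functions of `θ` alone.
Apply `H` to it. For mean-zero `f` the function `f + i H f` has only positive frequencies, a
property inherited by products, and any such `F` satisfies `H (Im F) = -Re F`. Applied to
`f + i H f` and to its square, this gives `H (H f) = -f` and `H (2 f H f) = (H f)² - f²`.
-/

open Filter Topology Function

local notation "𝕋" => AddCircle (2 * π)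

local instance fact_two_pi_pos : Fact (0 < 2 * π) := ⟨Real.two_pi_pos⟩

lemma fourier_two_pi_apply (n : ℤ) (θ : ℝ) :
    fourier n (θ : 𝕋) = Complex.exp (Complex.I * n * θ) := by
  rw [fourier_coe_apply]
  congr 1
  push_cast
  field_simp

lemma norm_fourier_apply (n : ℤ) (x : 𝕋) : ‖fourier n x‖ = 1 := by
  rw [fourier_apply, Circle.norm_coe]

lemma fourierC_eq (f : ℝ → ℝ) (n : ℤ) :
    fourierC f n = 1 / (2 * π) * ∫ θ in (0 : ℝ)..2 * π, (f θ : ℂ) * fourier (-n) (θ : 𝕋) := by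
  simp only [fourierC, fourier_two_pi_apply, Int.cast_neg, mul_neg, neg_mul]

lemma hilbertT_eq (f : ℝ → ℝ) (θ : ℝ) :
    hilbertT f θ = (∑' n : ℤ, -Complex.I * n.sign * fourierC f n * fourier n (θ : 𝕋)).re := by
  simp only [hilbertT, fourier_two_pi_apply]

/-- `F` is the sum of an absolutely convergent Fourier series with coefficients `a`.
In `ℂ`, summability is absolute summability. -/
structure HasAbsFourierSeries (F : ℝ → ℂ) (a : ℤ → ℂ) : Prop where
  summable : Summable a
  hasSum (θ : ℝ) : HasSum (fun n => a n * fourier n (θ : 𝕋)) (F θ)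

namespace HasAbsFourierSeries

variable {F G : ℝ → ℂ} {a b : ℤ → ℂ}

lemma of_summable (ha : Summable a) :
    HasAbsFourierSeries (fun θ => ∑' n, a n * fourier n (θ : 𝕋)) a where
  summable := ha
  hasSum θ :=
    (Summable.of_norm <| by simpa only [norm_mul, norm_fourier_apply, mul_one] using ha.norm).hasSum

lemma integral_mul_fourier_neg (h : HasAbsFourierSeries F a) (n : ℤ) :
    ∫ θ in (0 : ℝ)..2 * π, F θ * fourier (-n) (θ : 𝕋) = 2 * π * a n := by
  have orthogonality (k : ℤ) :
      ∫ θ in (0 : ℝ)..2 * π, a k * fourier k (θ : 𝕋) * fourier (-n) (θ : 𝕋) =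
        if k = n then 2 * π * a n else 0 := by
    have h := fourierCoeff_eq_intervalIntegral (T := 2 * π) (fourier k) n 0
    rw [fourierCoeff_fourier, zero_add] at h
    simp only [mul_assoc, intervalIntegral.integral_const_mul]
    simp only [mul_comm (fourier k _), ← smul_eq_mul (fourier (-n) _)]
    rw [eq_comm, one_div, inv_smul_eq_iff₀ (by positivity)] at h
    rw [h]
    rcases eq_or_ne k n with rfl | hk
    · simp; ring
    · simp [hk, hk.symm]
  have hsum := intervalIntegral.hasSum_integral_of_dominated_convergence (μ := volume)
    (a := 0) (b := 2 * π) (f := fun θ => F θ * fourier (-n) (θ : 𝕋))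
    (F := fun k θ => a k * fourier k (θ : 𝕋) * fourier (-n) (θ : 𝕋)) (fun k _ => ‖a k‖)
    (fun k => by
      refine Continuous.aestronglyMeasurable ?_
      fun_prop)
    (fun k => .of_forall fun θ _ => by simp only [norm_mul, norm_fourier_apply, mul_one, le_refl])
    (.of_forall fun _ _ => h.summable.norm)
    intervalIntegrable_const
    (.of_forall fun θ _ => (h.hasSum θ).mul_right _)
  simp only [orthogonality] at hsum
  exact hsum.unique (hasSum_ite_eq n _)

lemma coeff_unique (ha : HasAbsFourierSeries F a) (hb : HasAbsFourierSeries F b) : a = b := by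
  funext n
  have h := (ha.integral_mul_fourier_neg n).symm.trans (hb.integral_mul_fourier_neg n)
  exact mul_left_cancel₀ (by exact_mod_cast Real.two_pi_pos.ne') h

lemma fun_unique (hF : HasAbsFourierSeries F a) (hG : HasAbsFourierSeries G a) : F = G :=
  funext fun θ => (hF.hasSum θ).unique (hG.hasSum θ)

lemma fourierC_eq {f : ℝ → ℝ} (h : HasAbsFourierSeries (fun θ => (f θ : ℂ)) a) :
    fourierC f = a := by
  funext n
  rw [_root_.fourierC_eq, h.integral_mul_fourier_neg]
  field_simp

lemma add (hF : HasAbsFourierSeries F a) (hG : HasAbsFourierSeries G b) :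
    HasAbsFourierSeries (fun θ => F θ + G θ) (fun n => a n + b n) where
  summable := hF.summable.add hG.summable
  hasSum θ := by simpa only [add_mul] using (hF.hasSum θ).add (hG.hasSum θ)

lemma const_mul (c : ℂ) (hF : HasAbsFourierSeries F a) :
    HasAbsFourierSeries (fun θ => c * F θ) (fun n => c * a n) where
  summable := hF.summable.mul_left c
  hasSum θ := by simpa only [mul_assoc] using (hF.hasSum θ).mul_left c

lemma conj (hF : HasAbsFourierSeries F a) :
    HasAbsFourierSeries (fun θ => starRingEnd ℂ (F θ)) (fun n => starRingEnd ℂ (a (-n))) where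
  summable := Complex.summable_conj.mpr ((Equiv.neg ℤ).summable_iff.mpr hF.summable)
  hasSum θ := by
    have h := Complex.hasSum_conj'.mpr ((Equiv.neg ℤ).hasSum_iff.mpr (hF.hasSum θ))
    simpa only [comp_def, Equiv.neg_apply, map_mul, fourier_neg, Complex.conj_conj] using h

lemma mul (hF : HasAbsFourierSeries F a) (hG : HasAbsFourierSeries G b) :
    HasAbsFourierSeries (fun θ => F θ * G θ) (fun n => ∑' k, a k * b (n - k)) := by
  let shear : ℤ × ℤ ≃ ℤ × ℤ :=
    (Equiv.prodComm ℤ ℤ).trans (Equiv.prodShear (Equiv.refl ℤ) Equiv.subRight)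
  have hab : Summable fun p : ℤ × ℤ => a p.2 * b (p.1 - p.2) :=
    (shear.summable_iff (f := fun p : ℤ × ℤ => a p.1 * b p.2)).mpr
      (summable_mul_of_summable_norm hF.summable.norm hG.summable.norm)
  refine ⟨hab.prod, fun θ => ?_⟩
  have hnormF := (hF.hasSum θ).summable.norm
  have hnormG := (hG.hasSum θ).summable.norm
  have hnorm := summable_mul_of_summable_norm hnormF hnormG
  have hprod := (hF.hasSum θ).mul (hG.hasSum θ) hnorm
  refine HasSum.prod_fiberwise (shear.hasSum_iff.mpr hprod) fun n => ?_
  have hrow := (hab.prod_factor n).hasSum.mul_right (fourier n (θ : 𝕋))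
  refine hrow.congr_fun fun k => ?_
  have hchar : fourier n (θ : 𝕋) = fourier k (θ : 𝕋) * fourier (n - k) (θ : 𝕋) := by
    rw [← fourier_add, add_sub_cancel]
  rw [hchar, mul_mul_mul_comm]
  rfl

lemma hilbertT {f : ℝ → ℝ} (hf : HasAbsFourierSeries (fun θ => (f θ : ℂ)) a) :
    HasAbsFourierSeries (fun θ => (hilbertT f θ : ℂ)) (fun n => -Complex.I * n.sign * a n) := by
  have hsum : Summable fun n : ℤ => -Complex.I * n.sign * a n := by
    refine hf.summable.norm.of_norm_bounded fun n => ?_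
    rcases lt_trichotomy n 0 with hn | rfl | hn <;>
      simp [*, Int.sign_eq_neg_one_of_neg, Int.sign_eq_one_of_pos]
  have hseries := of_summable hsum
  have ha (n : ℤ) : starRingEnd ℂ (a (-n)) = a n := by
    have hconj := hf.conj
    simp only [Complex.conj_ofReal] at hconj
    exact congrFun (hconj.coeff_unique hf) n
  have hreal := hseries.conj
  have hsymm : (fun n : ℤ => starRingEnd ℂ (-Complex.I * (-n).sign * a (-n))) =
      fun n => -Complex.I * n.sign * a n := by
    funext n
    simp [ha]
  rw [hsymm] at hreal
  convert! hseries using 2 with θ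
  rw [hilbertT_eq, hf.fourierC_eq]
  exact Complex.conj_eq_iff_re.mp (congrFun (hreal.fun_unique hseries) θ)

end HasAbsFourierSeries

/-- `f` lies in the Wiener algebra of the circle: it is the sum of an absolutely convergent Fourier
series. -/
def MemWiener (f : ℝ → ℝ) : Prop :=
  ∃ a, HasAbsFourierSeries (fun θ => (f θ : ℂ)) a

namespace MemWiener

variable {f g : ℝ → ℝ}

lemma hasAbsFourierSeries (hf : MemWiener f) :
    HasAbsFourierSeries (fun θ => (f θ : ℂ)) (fourierC f) := by
  obtain ⟨a, ha⟩ := hf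
  exact ha.fourierC_eq ▸ ha

lemma mul (hf : MemWiener f) (hg : MemWiener g) : MemWiener fun θ => f θ * g θ :=
  ⟨_, by simpa only [Complex.ofReal_mul] using hf.hasAbsFourierSeries.mul hg.hasAbsFourierSeries⟩

lemma const_mul (c : ℝ) (hf : MemWiener f) : MemWiener fun θ => c * f θ :=
  ⟨_, by simpa only [Complex.ofReal_mul] using hf.hasAbsFourierSeries.const_mul c⟩

lemma hilbertT (hf : MemWiener f) : MemWiener (hilbertT f) :=
  ⟨_, hf.hasAbsFourierSeries.hilbertT⟩

lemma hilbertT_add (hf : MemWiener f) (hg : MemWiener g) (θ : ℝ) :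
    _root_.hilbertT (fun x => f x + g x) θ = _root_.hilbertT f θ + _root_.hilbertT g θ := by
  have hsum : HasAbsFourierSeries (fun x => ((f x + g x : ℝ) : ℂ))
      (fun n => fourierC f n + fourierC g n) := by
    simpa only [Complex.ofReal_add] using hf.hasAbsFourierSeries.add hg.hasAbsFourierSeries
  have hH := hf.hilbertT.hasAbsFourierSeries.add hg.hilbertT.hasAbsFourierSeries
  rw [hf.hasAbsFourierSeries.hilbertT.fourierC_eq, hg.hasAbsFourierSeries.hilbertT.fourierC_eq]
    at hH
  simp only [← mul_add] at hH
  exact_mod_cast congrFun (hsum.hilbertT.fun_unique hH) θ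

end MemWiener

lemma fourierC_neg (f : ℝ → ℝ) (n : ℤ) : fourierC (fun x => -f x) n = -fourierC f n := by
  simp only [fourierC, Complex.ofReal_neg, neg_mul (_ : ℂ) (Complex.exp _),
    intervalIntegral.integral_neg, mul_neg]

lemma intervalIntegrable_mul_fourier {f : ℝ → ℝ} {a b : ℝ} (hf : IntervalIntegrable f volume a b)
    (n : ℤ) : IntervalIntegrable (fun θ => (f θ : ℂ) * fourier n (θ : 𝕋)) volume a b :=
  IntervalIntegrable.mul_continuousOn (f := fun θ => (f θ : ℂ)) ⟨hf.1.ofReal, hf.2.ofReal⟩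
    (by fun_prop)

lemma fourierC_sub {f g : ℝ → ℝ} (hf : IntervalIntegrable f volume 0 (2 * π))
    (hg : IntervalIntegrable g volume 0 (2 * π)) (n : ℤ) :
    fourierC (fun x => f x - g x) n = fourierC f n - fourierC g n := by
  simp only [fourierC_eq, Complex.ofReal_sub, sub_mul]
  rw [intervalIntegral.integral_sub (intervalIntegrable_mul_fourier hf _)
    (intervalIntegrable_mul_fourier hg _), mul_sub]

lemma hilbertT_neg (f : ℝ → ℝ) (θ : ℝ) : hilbertT (fun x => -f x) θ = -hilbertT f θ := by
  simp only [hilbertT, fourierC_neg, mul_neg, neg_mul (_ * _) (Complex.exp _), tsum_neg,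
    Complex.neg_re]

/-- `F` is an analytic signal: the boundary value of a holomorphic function on the unit disc that
vanishes at the origin, encoded as an absolutely convergent Fourier series without nonpositive
frequencies. -/
def IsAnalyticSignal (F : ℝ → ℂ) : Prop :=
  ∃ a, HasAbsFourierSeries F a ∧ ∀ n ≤ 0, a n = 0

lemma IsAnalyticSignal.mul {F G : ℝ → ℂ} (hF : IsAnalyticSignal F) (hG : IsAnalyticSignal G) :
    IsAnalyticSignal fun θ => F θ * G θ := by
  obtain ⟨a, ha, ha0⟩ := hF
  obtain ⟨b, hb, hb0⟩ := hG
  refine ⟨_, ha.mul hb, fun n hn => ?_⟩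
  have hterm (k : ℤ) : a k * b (n - k) = 0 := by
    rcases le_or_gt k 0 with hk | hk
    · rw [ha0 k hk, zero_mul]
    · rw [hb0 (n - k) (by lia), mul_zero]
  simp only [hterm, tsum_zero]

lemma IsAnalyticSignal.hilbertT_im {F : ℝ → ℂ} (hF : IsAnalyticSignal F) (θ : ℝ) :
    hilbertT (fun x => (F x).im) θ = -(F θ).re := by
  obtain ⟨a, ha, ha0⟩ := hF
  have him := (ha.add (ha.conj.const_mul (-1))).const_mul (-Complex.I / 2)
  have hre := (ha.add ha.conj).const_mul (-1 / 2)
  have him_eq (x : ℝ) : -Complex.I / 2 * (F x + -1 * starRingEnd ℂ (F x)) = (F x).im := by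
    rw [Complex.im_eq_sub_conj]
    field_simp
    linear_combination (starRingEnd ℂ (F x) - F x) * Complex.I_sq
  have hre_eq (x : ℝ) : -1 / 2 * (F x + starRingEnd ℂ (F x)) = (-(F x).re : ℝ) := by
    rw [Complex.ofReal_neg, Complex.re_eq_add_conj]
    ring
  simp only [him_eq] at him
  simp only [hre_eq] at hre
  have hcoeff : (fun n : ℤ => -Complex.I * n.sign *
      (-Complex.I / 2 * (a n + -1 * starRingEnd ℂ (a (-n))))) =
      fun n => -1 / 2 * (a n + starRingEnd ℂ (a (-n))) := by
    funext n
    rcases lt_trichotomy n 0 with hn | rfl | hn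
    · rw [Int.sign_eq_neg_one_of_neg hn, ha0 n hn.le]
      push_cast
      linear_combination (1 / 2) * starRingEnd ℂ (a (-n)) * Complex.I_sq
    · simp [ha0 0 le_rfl]
    · rw [Int.sign_eq_one_of_pos hn, ha0 (-n) (by lia), map_zero]
      push_cast
      linear_combination (1 / 2) * a n * Complex.I_sq
  have hH := him.hilbertT
  rw [hcoeff] at hH
  exact_mod_cast congrFun (hH.fun_unique hre) θ

section MeanZero

variable {f : ℝ → ℝ} (hf : MemWiener f) (hf0 : fourierC f 0 = 0)
include hf hf0

lemma isAnalyticSignal_add_I_mul_hilbertT :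
    IsAnalyticSignal fun θ => f θ + Complex.I * hilbertT f θ := by
  refine ⟨_, hf.hasAbsFourierSeries.add (hf.hasAbsFourierSeries.hilbertT.const_mul Complex.I),
    fun n hn => ?_⟩
  rcases hn.lt_or_eq with hn | rfl
  · rw [Int.sign_eq_neg_one_of_neg hn]
    push_cast
    linear_combination fourierC f n * Complex.I_sq
  · simp [hf0]

lemma hilbertT_hilbertT (θ : ℝ) : hilbertT (hilbertT f) θ = -f θ := by
  simpa using (isAnalyticSignal_add_I_mul_hilbertT hf hf0).hilbertT_im θ

lemma hilbertT_two_mul_self_mul_hilbertT (θ : ℝ) :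
    hilbertT (fun x => 2 * (f x * hilbertT f x)) θ = hilbertT f θ ^ 2 - f θ ^ 2 := by
  have hsignal := isAnalyticSignal_add_I_mul_hilbertT hf hf0
  have h := (hsignal.mul hsignal).hilbertT_im θ
  simp only [Complex.mul_im, Complex.mul_re, Complex.add_im, Complex.add_re, Complex.ofReal_re,
    Complex.ofReal_im, Complex.I_re, Complex.I_im, zero_mul, one_mul, mul_zero, zero_add, add_zero,
    sub_zero, mul_comm (hilbertT f _) (f _), ← two_mul] at h
  rw [h]
  ring

end MeanZero

lemma eq_hilbertT_add_sq_sub_sq {v w g : ℝ → ℝ} (hv : MemWiener v) (hv0 : fourierC v 0 = 0)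
    (hw : MemWiener w) (hw0 : fourierC w 0 = 0)
    (h : ∀ θ, hilbertT w θ + g θ + 2 * v θ * hilbertT v θ = 0) (θ : ℝ) :
    w θ = hilbertT g θ + hilbertT v θ ^ 2 - v θ ^ 2 := by
  have hg : g = fun x => -(hilbertT w x + 2 * (v x * hilbertT v x)) := by
    funext x
    linarith [h x]
  have hHg : hilbertT g θ = -(-w θ + (hilbertT v θ ^ 2 - v θ ^ 2)) := by
    rw [hg, hilbertT_neg, hw.hilbertT.hilbertT_add ((hv.mul hv.hilbertT).const_mul 2),
      hilbertT_hilbertT hw hw0, hilbertT_two_mul_self_mul_hilbertT hv hv0]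
  linarith

section Periodic

variable {f : ℝ → ℝ}

lemma periodic_deriv {c : ℝ} (hper : Periodic f c) : Periodic (deriv f) c := fun x => by
  rw [← deriv_comp_add_const, hper.funext]

lemma fourierC_deriv (hf : ContDiff ℝ 1 f) (hper : Periodic f (2 * π)) (n : ℤ) :
    fourierC (deriv f) n = Complex.I * n * fourierC f n := by
  have hderiv : Continuous (deriv f) := hf.continuous_deriv le_rfl
  have hchar (θ : ℝ) : HasDerivAt (fun x : ℝ => fourier (-n) (x : 𝕋))
      (-Complex.I * n * fourier (-n) (θ : 𝕋)) θ := by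
    refine (hasDerivAt_fourier_neg (2 * π) n θ).congr_deriv ?_
    push_cast
    field_simp
  have hparts := intervalIntegral.integral_mul_deriv_eq_deriv_mul (a := 0) (b := 2 * π)
    (fun θ _ => ((hf.differentiable one_ne_zero θ).hasDerivAt.ofReal_comp)) (fun θ _ => hchar θ)
    ((Complex.continuous_ofReal.comp hderiv).intervalIntegrable _ _)
    (Continuous.intervalIntegrable (by fun_prop) _ _)
  have hboundary : (f (2 * π) : ℂ) * fourier (-n) ((2 * π : ℝ) : 𝕋) =
      f 0 * fourier (-n) ((0 : ℝ) : 𝕋) := by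
    rw [AddCircle.coe_period, QuotientAddGroup.mk_zero, hper.eq]
  simp only [hboundary, mul_left_comm (f _ : ℂ), intervalIntegral.integral_const_mul] at hparts
  rw [fourierC_eq, fourierC_eq]
  linear_combination (1 / (2 * π) : ℂ) * hparts

lemma fourierC_deriv_zero (hf : ContDiff ℝ 1 f) (hper : Periodic f (2 * π)) :
    fourierC (deriv f) 0 = 0 := by
  rw [fourierC_deriv hf hper, Int.cast_zero, mul_zero, zero_mul]

lemma fourierC_deriv_deriv (hf : ContDiff ℝ 2 f) (hper : Periodic f (2 * π)) (n : ℤ) :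
    fourierC (deriv (deriv f)) n = -(n : ℂ) ^ 2 * fourierC f n := by
  rw [fourierC_deriv hf.deriv' (periodic_deriv hper), fourierC_deriv (hf.of_le one_le_two) hper]
  linear_combination (n : ℂ) ^ 2 * fourierC f n * Complex.I_sq

lemma norm_fourierC_le {C : ℝ} (hC : ∀ x ∈ Set.Icc 0 (2 * π), ‖f x‖ ≤ C) (n : ℤ) :
    ‖fourierC f n‖ ≤ C := by
  have hint : ‖∫ θ in (0 : ℝ)..2 * π, (f θ : ℂ) * fourier (-n) (θ : 𝕋)‖ ≤ C * |2 * π - 0| := by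
    refine intervalIntegral.norm_integral_le_of_norm_le_const fun x hx => ?_
    rw [Set.uIoc_of_le (by positivity)] at hx
    rw [norm_mul, norm_fourier_apply, mul_one, Complex.norm_real]
    exact hC x ⟨hx.1.le, hx.2⟩
  rw [sub_zero, abs_of_pos Real.two_pi_pos] at hint
  have hscale : ‖(1 / (2 * π) : ℂ)‖ = 1 / (2 * π) := by simp [abs_of_pos Real.pi_pos]
  rw [fourierC_eq, norm_mul, hscale, one_div_mul_eq_div, div_le_iff₀ Real.two_pi_pos]
  exact hint

lemma norm_fourierC_le_div_sq (hf : ContDiff ℝ 2 f) (hper : Periodic f (2 * π)) {C : ℝ}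
    (hC : ∀ x ∈ Set.Icc 0 (2 * π), ‖deriv (deriv f) x‖ ≤ C) {n : ℤ} (hn : n ≠ 0) :
    ‖fourierC f n‖ ≤ C / n ^ 2 := by
  have h := norm_fourierC_le hC n
  rw [fourierC_deriv_deriv hf hper, norm_mul, norm_neg, norm_pow, Complex.norm_intCast, sq_abs] at h
  rwa [le_div_iff₀' (by positivity)]

lemma norm_sign_mul_fourierC_sub_le {g : ℝ → ℝ} (hf : ContDiff ℝ 2 f)
    (hfper : Periodic f (2 * π)) (hg : ContDiff ℝ 2 g) (hgper : Periodic g (2 * π)) {C : ℝ}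
    (hC : ∀ x ∈ Set.Icc 0 (2 * π), ‖deriv (deriv f) x - deriv (deriv g) x‖ ≤ C) (n : ℤ) :
    ‖-Complex.I * n.sign * (fourierC f n - fourierC g n)‖ ≤ C / n ^ 2 := by
  rcases eq_or_ne n 0 with rfl | hn
  · -- Both sides vanish: the left since `sign 0 = 0`, the right since `C / 0 = 0`.
    simp
  have hderiv : deriv (fun x => f x - g x) = fun x => deriv f x - deriv g x := funext fun x =>
    deriv_fun_sub (hf.differentiable two_ne_zero x) (hg.differentiable two_ne_zero x)
  have hderiv' (x : ℝ) : deriv (deriv fun x => f x - g x) x =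
      deriv (deriv f) x - deriv (deriv g) x := by
    rw [hderiv]
    exact deriv_fun_sub (hf.deriv'.differentiable one_ne_zero x)
      (hg.deriv'.differentiable one_ne_zero x)
  have hsign : ‖-Complex.I * n.sign‖ = 1 := by
    rcases hn.lt_or_gt with hn | hn <;>
      simp [hn, Int.sign_eq_neg_one_of_neg, Int.sign_eq_one_of_pos]
  rw [norm_mul, hsign, one_mul, ← fourierC_sub (hf.continuous.intervalIntegrable _ _)
    (hg.continuous.intervalIntegrable _ _)]
  exact norm_fourierC_le_div_sq (hf.sub hg) (hfper.sub hgper) (by simpa only [hderiv'] using hC) hn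

lemma summable_fourierC (hf : ContDiff ℝ 2 f) (hper : Periodic f (2 * π)) :
    Summable (fourierC f) := by
  obtain ⟨C, hC⟩ := isCompact_Icc.exists_bound_of_continuousOn (s := Set.Icc 0 (2 * π))
    (hf.deriv'.continuous_deriv le_rfl).continuousOn
  refine .of_norm_bounded_eventually (g := fun n : ℤ => C * (1 / (n : ℝ) ^ 2))
    ((Real.summable_one_div_int_pow.mpr one_lt_two).mul_left C) ?_
  filter_upwards [(Set.finite_singleton (0 : ℤ)).compl_mem_cofinite] with n hn
  rw [mul_one_div]
  exact norm_fourierC_le_div_sq hf hper hC hn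

lemma memWiener_of_contDiff (hf : ContDiff ℝ 2 f) (hper : Periodic f (2 * π)) : MemWiener f := by
  have hper_ofReal : Periodic (fun x => (f x : ℂ)) (2 * π) := hper.comp Complex.ofReal
  have hcont : Continuous fun x => (f x : ℂ) := Complex.continuous_ofReal.comp hf.continuous
  let F : C(𝕋, ℂ) := ⟨hper_ofReal.lift, hcont.quotient_lift _⟩
  have hF (x : ℝ) : F (x : 𝕋) = f x := hper_ofReal.lift_coe x
  have hcoeff : fourierCoeff F = fourierC f := by
    funext n
    rw [fourierCoeff_eq_intervalIntegral _ n 0, fourierC_eq, zero_add, Complex.real_smul]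
    simp only [hF, smul_eq_mul, mul_comm (fourier (-n) _)]
    push_cast
    rfl
  have hsum : Summable (fourierCoeff F) := hcoeff ▸ summable_fourierC hf hper
  refine ⟨fourierCoeff F, hsum, fun θ => ?_⟩
  simpa only [hF, smul_eq_mul] using has_pointwise_sum_fourier_series_of_summable hsum (θ : 𝕋)

lemma hasDerivAt_hilbertT (hf : ContDiff ℝ 3 f) (hper : Periodic f (2 * π)) (θ : ℝ) :
    HasDerivAt (hilbertT f) (hilbertT (deriv f) θ) θ := by
  have hf2 : ContDiff ℝ 2 f := hf.of_le (by norm_num)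
  have hH := (memWiener_of_contDiff hf2 hper).hasAbsFourierSeries.hilbertT
  have hH' := (memWiener_of_contDiff hf.deriv' (periodic_deriv hper)).hasAbsFourierSeries.hilbertT
  have hterm (n : ℤ) (x : ℝ) : HasDerivAt
      (fun y : ℝ => -Complex.I * n.sign * fourierC f n * fourier n (y : 𝕋))
      (-Complex.I * n.sign * fourierC (deriv f) n * fourier n (x : 𝕋)) x := by
    refine ((hasDerivAt_fourier (2 * π) n x).const_mul _).congr_deriv ?_
    rw [fourierC_deriv (hf.of_le (by norm_num)) hper]
    push_cast
    field_simp
  have hseries := hasDerivAt_tsum hH'.summable.norm hterm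
    (fun n x => by simp only [norm_mul, norm_fourier_apply, mul_one, le_refl])
    (hH.hasSum 0).summable θ
  rw [funext (hilbertT_eq f), hilbertT_eq]
  exact Complex.reCLM.hasFDerivAt.comp_hasDerivAt θ hseries

end Periodic

section DominatedDifferentiation

variable {𝕜 : Type*} [NontriviallyNormedField 𝕜] {E : Type*} [NormedAddCommGroup E] {s : Set 𝕜}
  {t : 𝕜}

lemma norm_slope_le_of_norm_sub_le [NormedSpace 𝕜 E] {f : 𝕜 → E} {t' : 𝕜} {C : ℝ} (hne : t' ≠ t)
    (h : ‖f t' - f t‖ ≤ C * ‖t' - t‖) : ‖slope f t t'‖ ≤ C := by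
  rw [slope_def_module, norm_smul, norm_inv,
    inv_mul_le_iff₀ (norm_pos_iff.mpr (sub_ne_zero.mpr hne)), mul_comm]
  exact h

lemma hasDerivWithinAt_tsum_of_dominated [NormedSpace 𝕜 E] [CompleteSpace E] {ι : Type*}
    {g : 𝕜 → ι → E} {g' : ι → E} {bound : ι → ℝ} (hbound : Summable bound)
    (hsum : ∀ᶠ t' in 𝓝[s] t, Summable (g t')) (hsum_t : Summable (g t))
    (hlip : ∀ᶠ t' in 𝓝[s] t, ∀ i, ‖g t' i - g t i‖ ≤ bound i * ‖t' - t‖)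
    (hg : ∀ i, HasDerivWithinAt (fun t' => g t' i) (g' i) s t) :
    HasDerivWithinAt (fun t' => ∑' i, g t' i) (∑' i, g' i) s t := by
  have hle : 𝓝[s \ {t}] t ≤ 𝓝[s] t := nhdsWithin_mono t Set.sdiff_subset
  simp only [hasDerivWithinAt_iff_tendsto_slope] at hg ⊢
  refine (tendsto_tsum_of_dominated_convergence hbound hg ?_).congr' ?_
  · filter_upwards [self_mem_nhdsWithin, hle hlip] with t' ht' hlip i
    exact norm_slope_le_of_norm_sub_le ht'.2 (hlip i)
  · filter_upwards [hle hsum] with t' hsum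
    simp only [slope_def_module]
    rw [tsum_const_smul'', hsum.tsum_sub hsum_t]

lemma hasDerivWithinAt_intervalIntegral_of_dominated [NormedSpace ℝ E] [NormedSpace 𝕜 E]
    [SMulCommClass ℝ 𝕜 E] {μ : Measure ℝ} {a b : ℝ} {F : 𝕜 → ℝ → E} {F' : ℝ → E} {bound : ℝ → ℝ}
    (hbound : IntervalIntegrable bound μ a b)
    (hint : ∀ᶠ t' in 𝓝[s] t, IntervalIntegrable (F t') μ a b)
    (hint_t : IntervalIntegrable (F t) μ a b)
    (hlip : ∀ᶠ t' in 𝓝[s] t, ∀ x ∈ Set.uIoc a b, ‖F t' x - F t x‖ ≤ bound x * ‖t' - t‖)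
    (hF : ∀ x ∈ Set.uIoc a b, HasDerivWithinAt (fun t' => F t' x) (F' x) s t) :
    HasDerivWithinAt (fun t' => ∫ x in a..b, F t' x ∂μ) (∫ x in a..b, F' x ∂μ) s t := by
  have hle : 𝓝[s \ {t}] t ≤ 𝓝[s] t := nhdsWithin_mono t Set.sdiff_subset
  simp only [hasDerivWithinAt_iff_tendsto_slope] at hF ⊢
  refine (intervalIntegral.tendsto_integral_filter_of_dominated_convergence bound ?_ ?_ hbound
    (.of_forall hF)).congr' ?_
  · filter_upwards [hle hint] with t' hint
    simp only [slope_def_module]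
    exact ((hint.sub hint_t).smul (t' - t)⁻¹).def'.aestronglyMeasurable
  · filter_upwards [self_mem_nhdsWithin, hle hlip] with t' ht' hlip
    exact .of_forall fun x hx => norm_slope_le_of_norm_sub_le ht'.2 (hlip x hx)
  · filter_upwards [hle hint] with t' hint
    simp only [slope_def_module]
    rw [intervalIntegral.integral_smul, intervalIntegral.integral_sub hint hint_t]

end DominatedDifferentiation

lemma exists_eventually_norm_sub_le_of_contDiffOn {E F G : Type*} [NormedAddCommGroup E]
    [NormedSpace ℝ E] [NormedAddCommGroup F] [NormedSpace ℝ F] [NormedAddCommGroup G]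
    [NormedSpace ℝ G] {s : Set E} {k r : Set F} {f : E → F → G} (hs : Convex ℝ s)
    (hr : Convex ℝ r) (hf : ContDiffOn ℝ 1 (uncurry f) (s ×ˢ r)) (hk : IsCompact k) (hkr : k ⊆ r)
    {t : E} (ht : t ∈ s) :
    ∃ K : ℝ, ∀ᶠ t' in 𝓝[s] t, ∀ x ∈ k, ‖f t' x - f t x‖ ≤ K * ‖t' - t‖ := by
  refine hk.induction_on ⟨0, by simp⟩ ?mono ?union ?nhds
  case mono =>
    rintro A B hAB ⟨K, hK⟩
    exact ⟨K, hK.mono fun t' h x hx => h x (hAB hx)⟩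
  case union =>
    rintro A B ⟨K, hK⟩ ⟨L, hL⟩
    refine ⟨max K L, ?_⟩
    filter_upwards [hK, hL] with t' hA hB x hx
    rcases hx with hx | hx
    · exact (hA x hx).trans (by gcongr; exact le_max_left K L)
    · exact (hB x hx).trans (by gcongr; exact le_max_right K L)
  case nhds =>
    intro x hx
    obtain ⟨K, N, hN, hlip⟩ := (hf (t, x) ⟨ht, hkr hx⟩).exists_lipschitzOnWith (hs.prod hr)
    obtain ⟨U, hU, V, hV, hUV⟩ := mem_nhdsWithin_prod_iff.mp hN
    refine ⟨V, nhdsWithin_mono x hkr hV, K, ?_⟩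
    filter_upwards [hU] with t' ht' y hy
    simpa [Prod.norm_def] using hlip.norm_sub_le (hUV (Set.mk_mem_prod ht' hy))
      (hUV (Set.mk_mem_prod (mem_of_mem_nhdsWithin ht hU) hy))

section Slices

variable {𝕜 : Type*} [NontriviallyNormedField 𝕜] {E : Type*} [NormedAddCommGroup E]
  [NormedSpace 𝕜 E] {I : Set 𝕜} {u : 𝕜 → 𝕜 → E} {n : WithTop ℕ∞} {t : 𝕜}

lemma contDiff_slice {F : Type*} [NormedAddCommGroup F] [NormedSpace 𝕜 F] {u : 𝕜 → F → E}
    (hu : ContDiffOn 𝕜 n (uncurry u) (I ×ˢ Set.univ)) (ht : t ∈ I) : ContDiff 𝕜 n (u t) :=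
  hu.comp_contDiff (f := fun x => (t, x)) (by fun_prop) fun x => ⟨ht, Set.mem_univ x⟩

lemma hasDerivWithinAt_time (hu : DifferentiableOn 𝕜 (uncurry u) (I ×ˢ Set.univ))
    (ht : t ∈ I) (x : 𝕜) :
    HasDerivWithinAt (fun s => u s x)
      (fderivWithin 𝕜 (uncurry u) (I ×ˢ Set.univ) (t, x) (1, 0)) I t :=
  (hu (t, x) ⟨ht, Set.mem_univ x⟩).hasFDerivWithinAt.comp_hasDerivWithinAt_of_eq
    (f := fun s => (s, x)) t
    ((hasDerivAt_id t).prodMk (hasDerivAt_const t x)).hasDerivWithinAt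
    (fun _ hs => ⟨hs, Set.mem_univ x⟩) rfl

lemma contDiffOn_deriv_space (hI : UniqueDiffOn 𝕜 I)
    (hu : ContDiffOn 𝕜 (n + 1) (uncurry u) (I ×ˢ Set.univ)) :
    ContDiffOn 𝕜 n (uncurry fun t => deriv (u t)) (I ×ˢ Set.univ) := by
  have hfderiv : ContDiffOn 𝕜 n
      (fun p => fderivWithin 𝕜 (uncurry u) (I ×ˢ Set.univ) p (0, 1)) (I ×ˢ Set.univ) :=
    (hu.fderivWithin (hI.prod uniqueDiffOn_univ) le_rfl).clm_apply contDiffOn_const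
  refine hfderiv.congr ?_
  rintro ⟨t, x⟩ hp
  have h := ((hu.differentiableOn (by simp)) (t, x) hp).hasFDerivWithinAt.comp_hasDerivWithinAt
    (f := fun y => (t, y)) (s := Set.univ) x
    ((hasDerivAt_const x t).prodMk (hasDerivAt_id x)).hasDerivWithinAt
    (fun y _ => ⟨hp.1, Set.mem_univ y⟩)
  exact (hasDerivWithinAt_univ.mp h).deriv

lemma contDiff_derivWithin_time (hI : UniqueDiffOn 𝕜 I)
    (hu : ContDiffOn 𝕜 (n + 1) (uncurry u) (I ×ˢ Set.univ)) (ht : t ∈ I) :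
    ContDiff 𝕜 n fun x => derivWithin (fun s => u s x) I t := by
  have hfderiv : ContDiffOn 𝕜 n
      (fun p => fderivWithin 𝕜 (uncurry u) (I ×ˢ Set.univ) p (1, 0)) (I ×ˢ Set.univ) :=
    (hu.fderivWithin (hI.prod uniqueDiffOn_univ) le_rfl).clm_apply contDiffOn_const
  have htime (x : 𝕜) := (hasDerivWithinAt_time (hu.differentiableOn (by simp)) ht x).derivWithin
    (hI t ht)
  simp only [htime]
  exact contDiff_slice (u := fun t x =>
    fderivWithin 𝕜 (uncurry u) (I ×ˢ Set.univ) (t, x) (1, 0)) hfderiv ht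

end Slices

section TimeDerivative

variable {I : Set ℝ} {u : ℝ → ℝ → ℝ}

lemma hasDerivWithinAt_fourierC (hI : Convex ℝ I)
    (hu : ContDiffOn ℝ 1 (uncurry u) (I ×ˢ Set.univ)) {t : ℝ} (ht : t ∈ I) (n : ℤ) :
    HasDerivWithinAt (fun s => fourierC (u s) n)
      (fourierC (fun θ => derivWithin (fun s => u s θ) I t) n) I t := by
  obtain ⟨K, hK⟩ := exists_eventually_norm_sub_le_of_contDiffOn hI convex_univ hu
    (isCompact_Icc (a := 0) (b := 2 * π)) (Set.subset_univ _) ht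
  have hint {s : ℝ} (hs : s ∈ I) :=
    intervalIntegrable_mul_fourier ((contDiff_slice hu hs).continuous.intervalIntegrable 0 (2 * π))
      (-n)
  simp only [fourierC_eq]
  refine (hasDerivWithinAt_intervalIntegral_of_dominated (bound := fun _ => K)
    intervalIntegrable_const (eventually_mem_nhdsWithin.mono fun s => hint) (hint ht) ?_
    fun θ _ => ?_).const_mul _
  · filter_upwards [hK] with s hs θ hθ
    rw [Set.uIoc_of_le Real.two_pi_pos.le] at hθ
    rw [← sub_mul, norm_mul, norm_fourier_apply, mul_one, ← Complex.ofReal_sub, Complex.norm_real]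
    exact hs θ ⟨hθ.1.le, hθ.2⟩
  · exact (hasDerivWithinAt_time (hu.differentiableOn one_ne_zero) ht
      θ).differentiableWithinAt.hasDerivWithinAt.ofReal_comp.mul_const _

lemma fourierC_derivWithin_eq_zero (hI : Convex ℝ I) (hI' : UniqueDiffOn ℝ I)
    (hu : ContDiffOn ℝ 1 (uncurry u) (I ×ˢ Set.univ)) {n : ℤ}
    (hzero : ∀ t ∈ I, fourierC (u t) n = 0) {t : ℝ} (ht : t ∈ I) :
    fourierC (fun θ => derivWithin (fun s => u s θ) I t) n = 0 := by
  rw [← (hasDerivWithinAt_fourierC hI hu ht n).derivWithin (hI' t ht),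
    derivWithin_congr hzero (hzero t ht), derivWithin_fun_const, Pi.zero_apply]

lemma hasDerivWithinAt_hilbertT (hI : Convex ℝ I) (hI' : UniqueDiffOn ℝ I)
    (hu : ContDiffOn ℝ 3 (uncurry u) (I ×ˢ Set.univ)) (hper : ∀ t ∈ I, Periodic (u t) (2 * π))
    {t : ℝ} (ht : t ∈ I) (θ : ℝ) :
    HasDerivWithinAt (fun s => hilbertT (u s) θ)
      (hilbertT (fun θ => derivWithin (fun s => u s θ) I t) θ) I t := by
  have hslice {s : ℝ} (hs : s ∈ I) : ContDiff ℝ 2 (u s) :=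
    (contDiff_slice hu hs).of_le (by norm_num)
  have hsum {s : ℝ} (hs : s ∈ I) :=
    ((memWiener_of_contDiff (hslice hs) (hper s hs)).hasAbsFourierSeries.hilbertT.hasSum θ).summable
  have huθθ : ContDiffOn ℝ 1 (uncurry fun t => deriv (deriv (u t))) (I ×ˢ Set.univ) :=
    contDiffOn_deriv_space hI' (contDiffOn_deriv_space hI' hu)
  obtain ⟨K, hK⟩ := exists_eventually_norm_sub_le_of_contDiffOn hI convex_univ huθθ
    (isCompact_Icc (a := 0) (b := 2 * π)) (Set.subset_univ _) ht
  have hlip : ∀ᶠ s in 𝓝[I] t, ∀ n : ℤ,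
      ‖-Complex.I * n.sign * fourierC (u s) n * fourier n (θ : 𝕋) -
        -Complex.I * n.sign * fourierC (u t) n * fourier n (θ : 𝕋)‖ ≤
        K * (1 / (n : ℝ) ^ 2) * ‖s - t‖ := by
    filter_upwards [eventually_mem_nhdsWithin, hK] with s hs hKs n
    rw [← sub_mul, ← mul_sub, norm_mul, norm_fourier_apply, mul_one, mul_one_div,
      div_mul_eq_mul_div]
    exact norm_sign_mul_fourierC_sub_le (hslice hs) (hper s hs) (hslice ht) (hper t ht) hKs n
  have hterm (n : ℤ) := ((hasDerivWithinAt_fourierC hI (hu.of_le (by norm_num)) ht n).const_mul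
    (-Complex.I * n.sign)).mul_const (fourier n (θ : 𝕋))
  simp only [hilbertT_eq]
  exact Complex.reCLM.hasFDerivAt.comp_hasDerivWithinAt t <| hasDerivWithinAt_tsum_of_dominated
    ((Real.summable_one_div_int_pow.mpr one_lt_two).mul_left K)
    (eventually_mem_nhdsWithin.mono fun s => hsum) (hsum ht) hlip hterm

end TimeDerivative

lemma hilbertT_zero (θ : ℝ) : hilbertT (fun _ => 0) θ = 0 := by
  simp [hilbertT, fourierC]

lemma eulerian_form_of_vorticity_form {f w : ℝ → ℝ} (hf : ContDiff ℝ 4 f)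
    (hper : Periodic f (2 * π)) (hw : MemWiener w) (hw0 : fourierC w 0 = 0)
    (h : ∀ θ, hilbertT w θ + f θ * deriv (hilbertT (deriv f)) θ +
      2 * deriv f θ * hilbertT (deriv f) θ = 0) (θ : ℝ) :
    w θ + f θ * deriv (deriv f) θ + deriv f θ ^ 2 =
      f θ * deriv (deriv f) θ + hilbertT (fun x => f x * hilbertT (deriv (deriv f)) x) θ +
        hilbertT (deriv f) θ ^ 2 := by
  have hf' : ContDiff ℝ 3 (deriv f) := hf.deriv'
  have hper' := periodic_deriv hper
  have hcomm (x : ℝ) : deriv (hilbertT (deriv f)) x = hilbertT (deriv (deriv f)) x :=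
    (hasDerivAt_hilbertT hf' hper' x).deriv
  simp only [hcomm] at h
  linarith [eq_hilbertT_add_sq_sub_sq (memWiener_of_contDiff (hf'.of_le (by norm_num)) hper')
    (fourierC_deriv_zero (hf.of_le (by norm_num)) hper) hw hw0 h θ]

theorem wunsch_eulerian_rewrite_general (I : Set ℝ) (hI : I.OrdConnected) (u : ℝ → ℝ → ℝ)
    (hu : ContDiffOn ℝ 4 (fun p : ℝ × ℝ => u p.1 p.2) (I ×ˢ Set.univ))
    (hper : ∀ t ∈ I, ∀ θ : ℝ, u t (θ + 2 * π) = u t θ)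
    (hpde : ∀ t ∈ I, ∀ θ : ℝ,
      derivWithin (fun s => hilbertT (deriv (u s)) θ) I t
        + u t θ * deriv (fun x => hilbertT (deriv (u t)) x) θ
        + 2 * deriv (u t) θ * hilbertT (deriv (u t)) θ = 0) :
    ∀ t ∈ I, ∀ θ : ℝ,
      derivWithin (fun s => deriv (u s) θ) I t
          + u t θ * deriv (deriv (u t)) θ + (deriv (u t) θ) ^ 2
        = u t θ * deriv (deriv (u t)) θ
          + hilbertT (fun x => u t x * hilbertT (deriv (deriv (u t))) x) θ
          + (hilbertT (deriv (u t)) θ) ^ 2 := by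
  intro t ht
  have hslice {s : ℝ} (hs : s ∈ I) : ContDiff ℝ 4 (u s) := contDiff_slice hu hs
  rcases I.subsingleton_or_nontrivial with hsub | hnontriv
  · have hderiv (φ : ℝ → ℝ) : derivWithin φ I t = 0 :=
      derivWithin_zero_of_not_accPt (mt Set.Infinite.of_accPt hsub.finite.not_infinite)
    have hpde_t := hpde t ht
    simp only [hderiv] at hpde_t ⊢
    exact eulerian_form_of_vorticity_form (w := fun _ => 0) (hslice ht) (hper t ht)
      (memWiener_of_contDiff contDiff_const fun _ => rfl) (by simp [fourierC])
      (by simpa only [hilbertT_zero] using hpde_t)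
  · have hI' : UniqueDiffOn ℝ I :=
      uniqueDiffOn_convex hI.convex (hI.convex.nontrivial_iff_nonempty_interior.mp hnontriv)
    have hv : ContDiffOn ℝ 3 (uncurry fun s => deriv (u s)) (I ×ˢ Set.univ) :=
      contDiffOn_deriv_space hI' hu
    have hvper : ∀ s ∈ I, Periodic (deriv (u s)) (2 * π) := fun s hs => periodic_deriv (hper s hs)
    refine eulerian_form_of_vorticity_form (hslice ht) (hper t ht)
      (memWiener_of_contDiff (contDiff_derivWithin_time hI' hv ht) fun θ =>
        derivWithin_congr (fun s hs => hvper s hs θ) (hvper t ht θ))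
      (fourierC_derivWithin_eq_zero hI.convex hI' (hv.of_le (by norm_num)) (fun s hs =>
        fourierC_deriv_zero ((hslice hs).of_le (by norm_num)) (hper s hs)) ht) fun θ => ?_
    rw [← (hasDerivWithinAt_hilbertT hI.convex hI' hv hvper ht θ).derivWithin (hI' t ht)]
    exact hpde t ht θ

/-- Eulerian rewriting of the Wunsch equation: if
`ω_t + u ω_θ + 2 u_θ ω = 0` with `ω = H(u_θ)` for mean-zero `u`, then
`u_{tθ} + u u_{θθ} + u_θ² = −F + ω²` with `F = −u u_{θθ} − H(u H(u_{θθ}))`. -/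
theorem wunsch_eulerian_rewrite (I : Set ℝ) (hI : I.OrdConnected)
    (u : ℝ → ℝ → ℝ)
    (hu : ContDiffOn ℝ (⊤ : ℕ∞) (fun p : ℝ × ℝ => u p.1 p.2) (I ×ˢ Set.univ))
    (hper : ∀ t ∈ I, ∀ θ : ℝ, u t (θ + 2 * π) = u t θ)
    (hmean : ∀ t ∈ I, (∫ θ in (0:ℝ)..(2 * π), u t θ) = 0)
    (hpde : ∀ t ∈ I, ∀ θ : ℝ,
      derivWithin (fun s => hilbertT (deriv (u s)) θ) I t
        + u t θ * deriv (fun x => hilbertT (deriv (u t)) x) θ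
        + 2 * deriv (u t) θ * hilbertT (deriv (u t)) θ = 0) :
    ∀ t ∈ I, ∀ θ : ℝ,
      derivWithin (fun s => deriv (u s) θ) I t
          + u t θ * deriv (deriv (u t)) θ + (deriv (u t) θ) ^ 2
        = u t θ * deriv (deriv (u t)) θ
          + hilbertT (fun x => u t x * hilbertT (deriv (deriv (u t))) x) θ
          + (hilbertT (deriv (u t)) θ) ^ 2 :=
  wunsch_eulerian_rewrite_general I hI u
    (hu.of_le (WithTop.coe_le_coe.mpr (le_top : (4 : ℕ∞) ≤ ⊤))) hper hpde
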